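/- arXiv:2202.10783 — 5 statements merged into one kernel-verified Lean document; each statement's English description precedes it below -/
import Mathlib

section
/- Let n ≥ 6, let J ∈ ℝ^{6×n} be such that J Jᵀ is invertible, let Z_x ∈ ℝ^{4×6} have linearly independent rows, and let G ∈ ℝ^{(n−6)×n} have linearly independent rows and satisfy G Jᵀ = 0. Then the matrix Z ∈ ℝ^{(n−2)×n} whose first 4 rows are Z_x (J Jᵀ)⁻¹ J and whose last n−6 rows are G has linearly independent rows, i.e. rank Z = n − 2. -/
/-!
The rows of `Z` are independent because its left kernel is trivial. If `(a, b)` kills `Z` from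
the left, multiplying `a (Zx (J Jᵀ)⁻¹ J) + b G = 0` on the right by `Jᵀ` removes the second term
(as `G Jᵀ = 0`) and collapses the first to `a Zx`. Hence `a = 0` by the full row rank of `Zx`,
and then `b G = 0` gives `b = 0` by the full row rank of `G`.
-/

open Matrix

/-- Full row rank, phrased as triviality of the left kernel. -/
lemma vecMul_injective_of_rank_eq {m k : ℕ} (A : Matrix (Fin m) (Fin k) ℝ) (h : A.rank = m) :
    Function.Injective A.vecMul := by
  rw [Matrix.vecMul_injective_iff, linearIndependent_iff_card_eq_finrank_span,
    Fintype.card_fin, Set.finrank, ← Matrix.rank_eq_finrank_span_row, h]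

/-- if `J Jᵀ` is invertible, `Z_x` has full row rank 4, `G` has full row rank
`n − 6` and `G Jᵀ = 0`, then `Z` stacking `Z_x (J Jᵀ)⁻¹ J` over `G` has full row rank `n − 2`. -/
theorem stmt3 (n : ℕ) (hn : 6 ≤ n)
    (J : Matrix (Fin 6) (Fin n) ℝ) (hJ : Invertible (J * Jᵀ))
    (Zx : Matrix (Fin 4) (Fin 6) ℝ) (hZx : Zx.rank = 4)
    (G : Matrix (Fin (n - 6)) (Fin n) ℝ) (hGrank : G.rank = n - 6) (hG : G * Jᵀ = 0)
    (Z : Matrix (Fin 4 ⊕ Fin (n - 6)) (Fin n) ℝ)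
    (hZ : Z = Matrix.fromRows (Zx * (J * Jᵀ)⁻¹ * J) G) :
    Z.rank = n - 2 := by
  have hinj : Function.Injective Z.vecMul := by
    change Function.Injective Z.vecMulLinear
    rw [injective_iff_map_eq_zero]
    intro v hv
    change v ᵥ* Z = 0 at hv
    obtain ⟨a, b, rfl⟩ : ∃ a b, v = Sum.elim a b :=
      ⟨v ∘ Sum.inl, v ∘ Sum.inr, (Sum.elim_comp_inl_inr v).symm⟩
    rw [hZ, Matrix.sumElim_vecMul_fromRows] at hv
    have hcollapse : Zx * (J * Jᵀ)⁻¹ * J * Jᵀ = Zx := by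
      rw [Matrix.mul_assoc, Matrix.mul_assoc, Matrix.inv_mul_of_invertible, Matrix.mul_one]
    have haZ : a ᵥ* Zx = 0 := by
      have h := congrArg (fun w => w ᵥ* Jᵀ) hv
      simpa only [Matrix.add_vecMul, Matrix.vecMul_vecMul, hG, hcollapse, Matrix.vecMul_zero,
        Matrix.zero_vecMul, add_zero] using h
    have ha : a = 0 := vecMul_injective_of_rank_eq Zx hZx (by simpa using haZ)
    subst ha
    have hb : b = 0 := vecMul_injective_of_rank_eq G hGrank (by simpa using hv)
    subst hb
    ext (i | i) <;> rfl
  rw [(Matrix.vecMul_injective_iff.mp hinj).rank_matrix, Fintype.card_sum, Fintype.card_fin,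
    Fintype.card_fin]
  omega
end

section
/- Fix p_i ∈ ℝ³ and constants k > 0, d_c > 0, d_0 > 0. Define ψ(p) = (‖p − p_i‖ − (d_0 + d_c))² / d_0² and the repulsive artificial potential V : {p ∈ ℝ³ : ‖p − p_i‖ > d_c} → ℝ by V(p) = (k/2)·(ln(1/(1 − ψ(p))))² if ‖p − p_i‖ ≤ d_c + d_0, and V(p) = 0 if ‖p − p_i‖ > d_c + d_0. Then V is continuously differentiable on the open set {p ∈ ℝ³ : ‖p − p_i‖ > d_c}; in particular the two branches join in a C¹ manner across the sphere ‖p − p_i‖ = d_c + d_0, where both V and its gradient vanish. -/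
/-!
Put `x = ‖p - pi‖ - (d0 + dc)`. Replacing `x` by its negative part `min x 0` merges the two branches
into the single formula `V p = k / 2 * (log (1 / (1 - (min x 0) ^ 2 / d0 ^ 2))) ^ 2`, since the
logarithm vanishes when `min x 0 = 0`. The function `x ↦ (min x 0) ^ 2` is C¹ with derivative
`2 * min x 0`, the norm is smooth away from the origin, and `-d0 < min x 0 ≤ 0` when
`dc < ‖p - pi‖`, so the argument of the logarithm is positive and `V` is C¹ by composition. As `V ≥ 0`
everywhere, each zero of `V` is a minimum, so the gradient vanishes on the junction sphere.
-/

lemma hasDerivAt_min_zero_sq (x : ℝ) :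
    HasDerivAt (fun x : ℝ => (min x 0) ^ 2) (2 * min x 0) x := by
  rcases lt_trichotomy x 0 with h | h | h
  · have h1 : HasDerivAt (fun x : ℝ => x ^ 2) (2 * min x 0) x := by
      simpa [min_eq_left h.le] using hasDerivAt_pow 2 x
    refine h1.congr_of_eventuallyEq ?_
    filter_upwards [eventually_lt_nhds h] with y hy
    rw [min_eq_left hy.le]
  · subst h
    -- At the junction, `(min y 0) ^ 2` is squeezed between `0` and `y ^ 2 = o(y)`.
    have h1 : HasDerivAt (fun x : ℝ => x ^ 2) 0 0 := by
      simpa using hasDerivAt_pow 2 (0 : ℝ)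
    rw [hasDerivAt_iff_isLittleO] at h1 ⊢
    refine Asymptotics.IsBigO.trans_isLittleO (Asymptotics.IsBigO.of_bound 1 ?_) h1
    refine Filter.Eventually.of_forall fun y => ?_
    rcases le_total y 0 with hy | hy
    · simp [min_eq_left hy]
    · simp [min_eq_right hy, sq_nonneg]
  · have h1 : HasDerivAt (fun _ : ℝ => (0 : ℝ)) (2 * min x 0) x := by
      simpa [min_eq_right h.le] using hasDerivAt_const x (0 : ℝ)
    refine h1.congr_of_eventuallyEq ?_
    filter_upwards [eventually_gt_nhds h] with y hy
    simp [min_eq_right hy.le]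

lemma contDiff_min_zero_sq : ContDiff ℝ 1 (fun x : ℝ => (min x 0) ^ 2) := by
  rw [contDiff_one_iff_deriv]
  refine ⟨fun x => (hasDerivAt_min_zero_sq x).differentiableAt, ?_⟩
  rw [show deriv (fun x : ℝ => (min x 0) ^ 2) = fun x => 2 * min x 0 from
    funext fun x => (hasDerivAt_min_zero_sq x).deriv]
  fun_prop

/-- the repulsive artificial potential, defined piecewise by
`V(p) = (k/2)(ln(1/(1−ψ(p))))²` for `‖p−p_i‖ ≤ d_c+d_0` and `V(p) = 0` otherwise
(with `ψ(p) = (‖p−p_i‖−(d_0+d_c))²/d_0²`), is continuously differentiable on the open set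
`{p : ‖p−p_i‖ > d_c}`; at the junction sphere `‖p−p_i‖ = d_c+d_0` both `V` and its
gradient vanish. -/
theorem stmt11 (pi : EuclideanSpace ℝ (Fin 3)) (k dc d0 : ℝ)
    (hk : 0 < k) (hdc : 0 < dc) (hd0 : 0 < d0)
    (ψ : EuclideanSpace ℝ (Fin 3) → ℝ)
    (hψ : ∀ p, ψ p = (‖p - pi‖ - (d0 + dc)) ^ 2 / d0 ^ 2)
    (V : EuclideanSpace ℝ (Fin 3) → ℝ)
    (hV : ∀ p, V p = if ‖p - pi‖ ≤ dc + d0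
      then k / 2 * (Real.log (1 / (1 - ψ p))) ^ 2 else 0) :
    ContDiffOn ℝ 1 V {p : EuclideanSpace ℝ (Fin 3) | dc < ‖p - pi‖} ∧
      ∀ p : EuclideanSpace ℝ (Fin 3), ‖p - pi‖ = dc + d0 →
        V p = 0 ∧ gradient V p = 0 := by
  have hV' : V = fun p => k / 2 *
      (Real.log (1 / (1 - (min (‖p - pi‖ - (d0 + dc)) 0) ^ 2 / d0 ^ 2))) ^ 2 := by
    funext p
    rw [hV, hψ]
    split_ifs with h
    · rw [min_eq_left (by linarith)]
    · rw [min_eq_right (by linarith)]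
      simp
  refine ⟨?_, fun p hp => ?_⟩
  · intro p hp
    have hp : dc < ‖p - pi‖ := hp
    have hne : p - pi ≠ 0 := norm_pos_iff.mp (hdc.trans hp)
    have hpos : 0 < 1 - (min (‖p - pi‖ - (d0 + dc)) 0) ^ 2 / d0 ^ 2 := by
      rw [sub_pos, div_lt_one (by positivity)]
      have h1 : -d0 < min (‖p - pi‖ - (d0 + dc)) 0 := lt_min (by linarith) (by linarith)
      have h2 : min (‖p - pi‖ - (d0 + dc)) 0 ≤ 0 := min_le_right _ _
      exact sq_lt_sq' h1 (by linarith)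
    have hr : ContDiffAt ℝ 1 (fun p : EuclideanSpace ℝ (Fin 3) => ‖p - pi‖ - (d0 + dc)) p :=
      ((contDiffAt_id.sub contDiffAt_const).norm ℝ hne).sub contDiffAt_const
    have hg : ContDiffAt ℝ 1 (fun p : EuclideanSpace ℝ (Fin 3) =>
        (min (‖p - pi‖ - (d0 + dc)) 0) ^ 2) p :=
      contDiff_min_zero_sq.contDiffAt.comp p hr
    have hden : ContDiffAt ℝ 1 (fun p : EuclideanSpace ℝ (Fin 3) =>
        1 - (min (‖p - pi‖ - (d0 + dc)) 0) ^ 2 / d0 ^ 2) p :=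
      contDiffAt_const.sub (hg.div_const _)
    rw [hV']
    exact (contDiffAt_const.mul (((contDiffAt_const.div hden hpos.ne').log
      (one_div_pos.mpr hpos).ne').pow 2)).contDiffWithinAt
  · have h0 : V p = 0 := by
      rw [hV, hψ, hp]
      simp [add_comm]
    refine ⟨h0, ?_⟩
    have hmin : IsLocalMin V p := by
      refine Filter.Eventually.of_forall fun q => ?_
      rw [h0, hV']
      positivity
    simp [gradient, hmin.fderiv_eq_zero]
end

section
/- Fix p_i ∈ ℝ³ and constants k > 0, d_c > 0, d_0 > 0. Define ψ(p) = (‖p − p_i‖ − (d_0 + d_c))² / d_0² and V(p) = (k/2)·(ln(1/(1 − ψ(p))))² for d_c < ‖p − p_i‖ ≤ d_c + d_0, and V(p) = 0 for ‖p − p_i‖ > d_c + d_0. Then for every M ≥ 0 and every p ∈ ℝ³ with ‖p − p_i‖ > d_c, the bound V(p) ≤ M implies ‖p − p_i‖ ≥ d_c + d_0·(1 − √(1 − exp(−√(2M/k)))). In particular, sublevel sets of V are bounded away from the forbidden sphere: the bound is a constant d₁(M) strictly greater than d_c. -/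
/-!
With `r = ‖p - pi‖` and `t = (d0 + dc - r) / d0`, one has `ψ p = t ^ 2` and `t < 1`. On the shell
`r ≤ dc + d0` also `0 ≤ t`, so `V p ≤ M` bounds `-log (1 - t ^ 2)` by `√(2 * M / k)`;
exponentiating gives `t ≤ √(1 - exp (-√(2 * M / k)))`, which is the claimed lower bound on `r`.
Outside the shell `t < 0` and the bound is immediate. The bound exceeds `dc` because `exp > 0`
makes the outer square root strictly less than `1`.
-/

/-- sublevel sets of the repulsive potential are bounded away from the
forbidden sphere: if `V(p) ≤ M` and `‖p−p_i‖ > d_c`, then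
`‖p−p_i‖ ≥ d_c + d_0(1 − √(1 − exp(−√(2M/k))))`, a bound strictly greater than `d_c`. -/
theorem stmt13 (pi : EuclideanSpace ℝ (Fin 3)) (k dc d0 : ℝ)
    (hk : 0 < k) (hdc : 0 < dc) (hd0 : 0 < d0)
    (ψ : EuclideanSpace ℝ (Fin 3) → ℝ)
    (hψ : ∀ p, ψ p = (‖p - pi‖ - (d0 + dc)) ^ 2 / d0 ^ 2)
    (V : EuclideanSpace ℝ (Fin 3) → ℝ)
    (hV : ∀ p, V p = if ‖p - pi‖ ≤ dc + d0
      then k / 2 * (Real.log (1 / (1 - ψ p))) ^ 2 else 0) :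
    ∀ M ≥ (0 : ℝ), ∀ p : EuclideanSpace ℝ (Fin 3), dc < ‖p - pi‖ → V p ≤ M →
      ‖p - pi‖ ≥ dc + d0 * (1 - Real.sqrt (1 - Real.exp (-Real.sqrt (2 * M / k)))) ∧
        dc < dc + d0 * (1 - Real.sqrt (1 - Real.exp (-Real.sqrt (2 * M / k)))) := by
  intro M hM p hp hVM
  rw [hV, hψ] at hVM
  set r := ‖p - pi‖ with hr
  set s := Real.sqrt (2 * M / k) with hs
  have hlt : Real.sqrt (1 - Real.exp (-s)) < 1 := by
    rw [Real.sqrt_lt' one_pos]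
    linarith [Real.exp_pos (-s)]
  refine ⟨?_, by nlinarith⟩
  have hnn := Real.sqrt_nonneg (1 - Real.exp (-s))
  split_ifs at hVM with hle
  · obtain ⟨t, ht⟩ : ∃ t, t = (d0 + dc - r) / d0 := ⟨_, rfl⟩
    have hrt : r = d0 + dc - d0 * t := by rw [ht]; field_simp; ring
    have ht0 : 0 ≤ t := by rw [ht]; exact div_nonneg (by linarith) hd0.le
    have ht1 : t < 1 := by rw [ht, div_lt_one hd0]; linarith
    have hψt : (r - (d0 + dc)) ^ 2 / d0 ^ 2 = t ^ 2 := by rw [ht]; field_simp; ring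
    have hpos : 0 < 1 - t ^ 2 := by nlinarith
    rw [hψt, one_div, Real.log_inv] at hVM
    have hsq : (-Real.log (1 - t ^ 2)) ^ 2 ≤ 2 * M / k := by
      rw [le_div_iff₀ hk]; linarith
    have hlog : -Real.log (1 - t ^ 2) ≤ s := Real.le_sqrt_of_sq_le hsq
    have hexp : Real.exp (-s) ≤ 1 - t ^ 2 :=
      (Real.le_log_iff_exp_le hpos).1 (by linarith)
    have hts : t ≤ Real.sqrt (1 - Real.exp (-s)) :=
      Real.le_sqrt_of_sq_le (by linarith)
    nlinarith
  · nlinarith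
end

section
/- Let 𝒪 ⊆ ℝ³ be a finite set of points and fix constants k > 0, d_c > 0, d_0 > 0. For each p_i ∈ 𝒪 define ψ_i(p) = (‖p − p_i‖ − (d_0 + d_c))² / d_0² and V_i(p) = (k/2)·(ln(1/(1 − ψ_i(p))))² for d_c < ‖p − p_i‖ ≤ d_c + d_0, and V_i(p) = 0 for ‖p − p_i‖ > d_c + d_0. Let p : [0, ∞) → ℝ³ be continuous with ‖p(0) − p_i‖ > d_c for all p_i ∈ 𝒪, and suppose there is M ≥ 0 such that for every t ≥ 0, if ‖p(t) − p_i‖ > d_c for all p_i ∈ 𝒪 then Σ_{p_i ∈ 𝒪} V_i(p(t)) ≤ M. Then the forbidden region is never violated: for all t ≥ 0 and all p_i ∈ 𝒪, ‖p(t) − p_i‖ ≥ d_c + d_0·(1 − √(1 − exp(−√(2M/k)))) > d_c; in particular p(t) never enters or touches the union of closed balls of radius d_c centered at the points of 𝒪. -/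
/-!
The logarithmic barrier is a strictly decreasing function of the distance on `(dc, dc + d0]`, so a
bound `M` on the potential forces the distance, once it exceeds `dc`, to be at least the radius
`r = dc + d0 * (1 - √(1 - exp (-√(2 * M / k))))` (`barrier_dist_ge`), and `r > dc` (`barrier_gap`).
Consequently the set of safe times, where all distances exceed `dc`, is also the set of times where
all distances are at least `r`. By continuity the first description is open and the second closed in
`[0, ∞)`; this set contains `0`, so by connectedness it is all of `[0, ∞)`.
-/

lemma barrier_gap (dc d0 s : ℝ) (hd0 : 0 < d0) :
    dc < dc + d0 * (1 - Real.sqrt (1 - Real.exp (-s))) := by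
  have h : Real.sqrt (1 - Real.exp (-s)) < 1 := by
    rw [Real.sqrt_lt' one_pos]
    linarith [Real.exp_pos (-s)]
  linarith [mul_pos hd0 (sub_pos.2 h)]

/-- Inversion of the barrier: a distance `x > dc` at which the potential is at most `M` lies beyond
the radius where the potential equals `M`. -/
lemma barrier_dist_ge (k dc d0 M x : ℝ) (hk : 0 < k) (hd0 : 0 < d0) (hM : 0 ≤ M) (hx : dc < x)
    (h : x ≤ dc + d0 →
      k / 2 * (Real.log (1 / (1 - (x - (d0 + dc)) ^ 2 / d0 ^ 2))) ^ 2 ≤ M) :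
    dc + d0 * (1 - Real.sqrt (1 - Real.exp (-Real.sqrt (2 * M / k)))) ≤ x := by
  by_contra! hlt
  set s := Real.sqrt (2 * M / k) with hs
  have hs0 : 0 ≤ s := Real.sqrt_nonneg _
  have hs2 : s ^ 2 = 2 * M / k := Real.sq_sqrt (by positivity)
  set w := Real.sqrt (1 - Real.exp (-s)) with hw
  have hw0 : 0 ≤ w := Real.sqrt_nonneg _
  have hw2 : w ^ 2 = 1 - Real.exp (-s) :=
    Real.sq_sqrt (by linarith [Real.exp_le_one_iff.2 (neg_nonpos.2 hs0)])
  -- `u` is the normalised penetration depth, so that `ψ = u ^ 2`.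
  obtain ⟨u, hu⟩ : ∃ u, d0 + dc - x = d0 * u := ⟨(d0 + dc - x) / d0, by field_simp⟩
  have hu1 : u < 1 := by nlinarith
  have hwu : w < u := by nlinarith
  have hpsi : (x - (d0 + dc)) ^ 2 / d0 ^ 2 = u ^ 2 := by
    rw [show x - (d0 + dc) = -(d0 * u) by linarith]
    field_simp
  have hb := h (by nlinarith)
  rw [hpsi, one_div, Real.log_inv, neg_sq] at hb
  have hpos : 0 < 1 - u ^ 2 := by nlinarith
  have hlog : Real.log (1 - u ^ 2) < -s := by
    rw [Real.log_lt_iff_lt_exp hpos]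
    nlinarith
  have hsq : s ^ 2 < Real.log (1 - u ^ 2) ^ 2 := by nlinarith
  have hMk : k / 2 * s ^ 2 = M := by
    rw [hs2]
    field_simp
  nlinarith

/-- if a continuous trajectory starts outside the forbidden spheres and the
total repulsive potential stays bounded by `M` whenever the trajectory is outside them,
then the forbidden region is never violated: the distance to every cloud point stays at
least `d_c + d_0(1 − √(1 − exp(−√(2M/k)))) > d_c`; in particular the trajectory never
enters or touches the union of closed balls of radius `d_c` around the cloud points. -/
theorem stmt14 (O : Finset (EuclideanSpace ℝ (Fin 3))) (k dc d0 M : ℝ)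
    (hk : 0 < k) (hdc : 0 < dc) (hd0 : 0 < d0) (hM : 0 ≤ M)
    (V : EuclideanSpace ℝ (Fin 3) → EuclideanSpace ℝ (Fin 3) → ℝ)
    (hV : ∀ pi q, V pi q = if ‖q - pi‖ ≤ dc + d0
      then k / 2 * (Real.log (1 / (1 - (‖q - pi‖ - (d0 + dc)) ^ 2 / d0 ^ 2))) ^ 2 else 0)
    (p : ℝ → EuclideanSpace ℝ (Fin 3)) (hp : ContinuousOn p (Set.Ici 0))
    (hinit : ∀ pi ∈ O, dc < ‖p 0 - pi‖)
    (hbound : ∀ t ≥ (0 : ℝ), (∀ pi ∈ O, dc < ‖p t - pi‖) →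
      ∑ pi ∈ O, V pi (p t) ≤ M) :
    ∀ t ≥ (0 : ℝ), ∀ pi ∈ O,
      ‖p t - pi‖ ≥ dc + d0 * (1 - Real.sqrt (1 - Real.exp (-Real.sqrt (2 * M / k)))) ∧
      dc < dc + d0 * (1 - Real.sqrt (1 - Real.exp (-Real.sqrt (2 * M / k)))) ∧
      p t ∉ Metric.closedBall pi dc := by
  set r := dc + d0 * (1 - Real.sqrt (1 - Real.exp (-Real.sqrt (2 * M / k)))) with hr
  have hgap : dc < r := barrier_gap dc d0 _ hd0
  have key : ∀ t ≥ (0 : ℝ), (∀ pi ∈ O, dc < ‖p t - pi‖) → ∀ pi ∈ O, r ≤ ‖p t - pi‖ := by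
    intro t ht hsafe pi hpi
    refine barrier_dist_ge k dc d0 M _ hk hd0 hM (hsafe pi hpi) fun hle => ?_
    have hnonneg : ∀ qi ∈ O, 0 ≤ V qi (p t) := by
      intro qi _
      rw [hV]
      split_ifs <;> positivity
    have hone := (Finset.single_le_sum hnonneg hpi).trans (hbound t ht hsafe)
    rwa [hV, if_pos hle] at hone
  have hcont : ∀ pi, Continuous fun t : Set.Ici (0 : ℝ) => ‖p t - pi‖ := fun pi =>
    (hp.domRestrict.sub continuous_const).norm
  let S : Set (Set.Ici (0 : ℝ)) := {t | ∀ pi ∈ O, dc < ‖p t - pi‖}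
  have hopen : IsOpen S := by
    have : S = ⋂ pi ∈ O, {t : Set.Ici (0 : ℝ) | dc < ‖p t - pi‖} := by
      ext t
      simp [S]
    rw [this]
    exact isOpen_biInter_finset fun pi _ => isOpen_lt continuous_const (hcont pi)
  have hclosed : IsClosed S := by
    have : S = ⋂ pi ∈ O, {t : Set.Ici (0 : ℝ) | r ≤ ‖p t - pi‖} := by
      ext t
      simp only [S, Set.mem_setOf_eq, Set.mem_iInter]
      exact ⟨key t t.2, fun h pi hpi => hgap.trans_le (h pi hpi)⟩
    rw [this]
    exact isClosed_biInter fun pi _ => isClosed_le continuous_const (hcont pi)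
  have : PreconnectedSpace (Set.Ici (0 : ℝ)) := Subtype.preconnectedSpace isPreconnected_Ici
  have huniv : S = Set.univ :=
    IsClopen.eq_univ ⟨hclosed, hopen⟩ ⟨⟨0, Set.self_mem_Ici⟩, hinit⟩
  intro t ht pi hpi
  have hsafe : ∀ qi ∈ O, dc < ‖p t - qi‖ := by
    have : (⟨t, ht⟩ : Set.Ici (0 : ℝ)) ∈ S := huniv ▸ Set.mem_univ _
    exact this
  refine ⟨key t ht hsafe pi hpi, hgap, ?_⟩
  rw [Metric.mem_closedBall, dist_eq_norm, not_le]
  exact hsafe pi hpi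
end

section
/- Let U ⊆ ℝ^m be open, V : U → ℝ be continuously differentiable, D ∈ ℝ^{m×m} symmetric positive definite, u : ℝ → ℝ^m continuous, and p : [0, T] → U twice continuously differentiable with p̈(t) + D ṗ(t) = u(t) − ∇V(p(t)) for all t ∈ [0, T]. Then the total energy E(t) = (1/2)‖ṗ(t)‖² + V(p(t)) satisfies E(T) ≤ E(0) + ∫₀^T (1/4) u(t)ᵀ D⁻¹ u(t) dt. In particular, if the input has bounded energy (the integral is finite), the kinetic energy and potential remain bounded along the trajectory. -/
/-!
Along the trajectory the gradient forces cancel, so `E' = ṗ ⬝ u - ṗ ⬝ D ṗ`. Completing the square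
at `w = ṗ - (1/2) D⁻¹ u`, i.e. expanding `0 ≤ w ⬝ D w`, bounds this by `(1/4) u ⬝ D⁻¹ u`
(`dot_sub_le`), and integrating the bound over `[0, T]` gives the claim.
-/

open Matrix

/-- Matrix form of Young's inequality: the supplied power minus the dissipated power. -/
lemma dot_sub_le {m : ℕ} {D : Matrix (Fin m) (Fin m) ℝ} (hD : D.PosDef) (v u : Fin m → ℝ) :
    v ⬝ᵥ u - v ⬝ᵥ D *ᵥ v ≤ (1 / 4) * (u ⬝ᵥ D⁻¹ *ᵥ u) := by
  have hdet : IsUnit D.det := (Matrix.isUnit_iff_isUnit_det D).1 hD.isUnit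
  have hsymm : Dᵀ = D := by
    have h := hD.isHermitian.eq
    rwa [Matrix.conjTranspose_eq_transpose_of_trivial] at h
  have hDy : D *ᵥ (D⁻¹ *ᵥ u) = u := by
    rw [Matrix.mulVec_mulVec, Matrix.mul_nonsing_inv D hdet, Matrix.one_mulVec]
  have hyD : (D⁻¹ *ᵥ u) ⬝ᵥ D *ᵥ v = v ⬝ᵥ u := by
    rw [Matrix.dotProduct_mulVec, ← Matrix.mulVec_transpose, hsymm, hDy, dotProduct_comm]
  have h := hD.posSemidef.dotProduct_mulVec_nonneg (v - (1 / 2 : ℝ) • (D⁻¹ *ᵥ u))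
  simp only [star_trivial, Matrix.mulVec_sub, Matrix.mulVec_smul, hDy, sub_dotProduct,
    dotProduct_sub, smul_dotProduct, dotProduct_smul, hyD, smul_eq_mul] at h
  rw [dotProduct_comm (D⁻¹ *ᵥ u) u] at h
  linarith

/-- for the dynamics `p̈ + D ṗ = u − ∇V(p)` on `[0, T]` with `V` continuously
differentiable on an open set `U` containing the trajectory and `D` symmetric positive
definite, the total energy `E = (1/2)‖ṗ‖² + V(p)` satisfies
`E(T) ≤ E(0) + ∫₀ᵀ (1/4) uᵀ D⁻¹ u`. Here `∇V(x)ᵢ = (fderiv V x)(eᵢ)` is the Euclidean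
gradient of `V`. -/
theorem stmt17 (m : ℕ) (T : ℝ) (hT : 0 ≤ T)
    (U : Set (Fin m → ℝ)) (hU : IsOpen U)
    (V : (Fin m → ℝ) → ℝ) (hV : ContDiffOn ℝ 1 V U)
    (D : Matrix (Fin m) (Fin m) ℝ) (hD : D.PosDef)
    (u : ℝ → Fin m → ℝ) (hu : Continuous u)
    (p : ℝ → Fin m → ℝ) (hp : ContDiff ℝ 2 p)
    (hmaps : ∀ t ∈ Set.Icc (0 : ℝ) T, p t ∈ U)
    (gradV : (Fin m → ℝ) → Fin m → ℝ)
    (hgrad : ∀ x, gradV x = fun i => fderiv ℝ V x (Pi.single i 1))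
    (hode : ∀ t ∈ Set.Icc (0 : ℝ) T,
      deriv (deriv p) t + D *ᵥ deriv p t = u t - gradV (p t))
    (E : ℝ → ℝ)
    (hE : ∀ t, E t = (1 / 2) * (deriv p t ⬝ᵥ deriv p t) + V (p t)) :
    E T ≤ E 0 + ∫ t in (0 : ℝ)..T, (1 / 4) * (u t ⬝ᵥ D⁻¹ *ᵥ u t) := by
  have hp1 : ContDiff ℝ 1 (deriv p) := ContDiff.deriv' (n := 1) hp
  have hd1 : ∀ t, HasDerivAt p (deriv p t) t := fun t =>
    ((hp.differentiable (by norm_num)) t).hasDerivAt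
  have hd2 : ∀ t, HasDerivAt (deriv p) (deriv (deriv p) t) t := fun t =>
    ((hp1.differentiable (by norm_num)) t).hasDerivAt
  have hderiv : ∀ t ∈ Set.Icc (0 : ℝ) T,
      HasDerivAt E (deriv p t ⬝ᵥ u t - deriv p t ⬝ᵥ D *ᵥ deriv p t) t := by
    intro t ht
    have hVd : HasFDerivAt V (fderiv ℝ V (p t)) (p t) :=
      ((hV.contDiffAt (hU.mem_nhds (hmaps t ht))).differentiableAt (by norm_num)).hasFDerivAt
    have hV' : HasDerivAt (fun s => V (p s)) (fderiv ℝ V (p t) (deriv p t)) t :=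
      hVd.comp_hasDerivAt t (hd1 t)
    have hK : HasDerivAt (fun s => deriv p s ⬝ᵥ deriv p s)
        (∑ i, (deriv (deriv p) t i * deriv p t i + deriv p t i * deriv (deriv p) t i)) t :=
      HasDerivAt.fun_sum fun i _ =>
        (hasDerivAt_pi.1 (hd2 t) i).mul (hasDerivAt_pi.1 (hd2 t) i)
    have hg : fderiv ℝ V (p t) (deriv p t) = deriv p t ⬝ᵥ gradV (p t) := by
      rw [hgrad]
      refine ((fderiv ℝ V (p t)).toLinearMap.pi_apply_eq_sum_univ (deriv p t)).trans ?_
      refine Finset.sum_congr rfl fun i _ => ?_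
      rw [smul_eq_mul, ContinuousLinearMap.coe_coe]
      congr 2
      ext j
      simp [Pi.single_apply, eq_comm]
    have hacc : deriv (deriv p) t = u t - gradV (p t) - D *ᵥ deriv p t :=
      eq_sub_of_add_eq (hode t ht)
    have hS : ∑ i, (deriv (deriv p) t i * deriv p t i + deriv p t i * deriv (deriv p) t i)
        = 2 * (deriv p t ⬝ᵥ deriv (deriv p) t) := by
      rw [dotProduct, Finset.mul_sum]
      exact Finset.sum_congr rfl fun i _ => by ring
    have hsum := (hK.const_mul (1 / 2)).add hV'
    rw [funext hE]
    refine hsum.congr_deriv ?_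
    rw [hS, hg, hacc, dotProduct_sub, dotProduct_sub]
    ring
  have hcont : Continuous fun t => (1 / 4 : ℝ) * (u t ⬝ᵥ D⁻¹ *ᵥ u t) :=
    continuous_const.mul (hu.dotProduct (continuous_const.matrix_mulVec hu))
  have h := intervalIntegral.sub_le_integral_of_hasDeriv_right_of_le hT
    (fun t ht => (hderiv t ht).continuousAt.continuousWithinAt)
    (fun t ht => (hderiv t (Set.Ioo_subset_Icc_self ht)).hasDerivWithinAt)
    hcont.continuousOn.integrableOn_Icc
    (fun t _ => dot_sub_le hD (deriv p t) (u t))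
  linarith
end
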